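/- Let L be a real symmetric n×n matrix with L_{ij} ≤ 0 for all i ≠ j and all row sums zero, and suppose the graph on the index set with an edge between i and j whenever L_{ij} < 0 is connected. Then for every nonempty proper subset S of the index set, the grounded Laplacian L_ff (the principal submatrix of L on the complement of S) is positive definite. -/

import Mathlib

open Matrix

theorem aux_sum {n : ℕ} (S : Finset (Fin n)) (f : Fin n → ℝ) (hf : ∀ i ∈ S, f i = 0) :
    ∑ i : {i : Fin n // i ∉ S}, f i.1 = ∑ i, f i := by
  rw [← Fintype.sum_subtype_add_sum_subtype (fun i => i ∉ S) f]
  have : ∑ i : {i : Fin n // ¬ i ∉ S}, f i.1 = 0 :=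
    Finset.sum_eq_zero (fun i _ => hf i.1 (not_not.mp i.2))
  rw [this, add_zero]

theorem aux_quad {n : ℕ} (L : Matrix (Fin n) (Fin n) ℝ)
    (hsym : L.IsSymm) (hrow : ∀ i, ∑ j, L i j = 0) (y : Fin n → ℝ) :
    ∑ i, ∑ j, (-L i j) * (y i - y j) ^ 2 = 2 * ∑ i, ∑ j, y i * (L i j * y j) := by
  have h1 : ∑ i, ∑ j, L i j * (y i) ^ 2 = 0 := by
    simp [← Finset.sum_mul, hrow]
  have h2 : ∑ i, ∑ j, L i j * (y j) ^ 2 = 0 := by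
    rw [Finset.sum_comm, ← h1]
    refine Finset.sum_congr rfl fun i _ => Finset.sum_congr rfl fun j _ => ?_
    rw [hsym.apply i j]
  have : ∑ i, ∑ j, (-L i j) * (y i - y j) ^ 2 = 2 * ∑ i, ∑ j, y i * (L i j * y j)
      - ∑ i, ∑ j, L i j * (y i) ^ 2 - ∑ i, ∑ j, L i j * (y j) ^ 2 := by
    simp only [Finset.mul_sum, ← Finset.sum_sub_distrib]
    refine Finset.sum_congr rfl fun i _ => Finset.sum_congr rfl fun j _ => ?_
    ring
  rw [this, h1, h2]; ring

/-- let `L` be a real symmetric matrix with nonpositive off-diagonal entries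
and zero row sums, such that the graph with an edge `{i,j}` whenever `L i j < 0` is
connected (a weighted Laplacian of a connected graph). Then for every nonempty proper
leader set `S`, the grounded Laplacian `L_ff` (the principal submatrix on the complement
of `S`) is positive definite. -/
theorem grounded_posDef {n : ℕ} (L : Matrix (Fin n) (Fin n) ℝ)
    (hsym : L.IsSymm)
    (hoff : ∀ i j, i ≠ j → L i j ≤ 0)
    (hrow : ∀ i, ∑ j, L i j = 0)
    (G : SimpleGraph (Fin n)) (hG : ∀ i j, G.Adj i j ↔ i ≠ j ∧ L i j < 0)
    (hconn : G.Connected)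
    (S : Finset (Fin n)) (hne : S.Nonempty) (hproper : S ≠ Finset.univ) :
    (L.submatrix (Subtype.val : {i : Fin n // i ∉ S} → Fin n)
      (Subtype.val : {i : Fin n // i ∉ S} → Fin n)).PosDef := by
  refine Matrix.PosDef.of_dotProduct_mulVec_pos ?_ ?_
  · ext i j
    simp [hsym.apply]
  intro x hx
  set y : Fin n → ℝ := fun i => if h : i ∉ S then x ⟨i, h⟩ else 0 with hy
  have hyS : ∀ i ∈ S, y i = 0 := fun i hi => by simp [hy, hi]
  have hyx : ∀ i : {i : Fin n // i ∉ S}, x i = y i.1 := fun i => by simp [hy, i.2]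
  have key : star x ⬝ᵥ ((L.submatrix (Subtype.val : {i : Fin n // i ∉ S} → Fin n)
      (Subtype.val : {i : Fin n // i ∉ S} → Fin n)) *ᵥ x) =
      ∑ i, ∑ j, y i * (L i j * y j) := by
    rw [← aux_sum S (fun i => ∑ j, y i * (L i j * y j)) (fun i hi => by simp [hyS i hi])]
    simp only [dotProduct, mulVec, Finset.mul_sum, Pi.star_apply, star_trivial, submatrix_apply]
    refine Finset.sum_congr rfl fun i _ => ?_
    rw [← aux_sum S (fun j => y i.1 * (L i.1 j * y j)) (fun j hj => by simp [hyS j hj])]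
    exact Finset.sum_congr rfl fun j _ => by rw [hyx i, hyx j]
  rw [key]
  have hq := aux_quad L hsym hrow y
  have hnn : ∀ i j, 0 ≤ (-L i j) * (y i - y j) ^ 2 := by
    intro i j
    by_cases h : i = j
    · simp [h]
    · exact mul_nonneg (by linarith [hoff i j h]) (sq_nonneg _)
  have hnn' : ∀ i, 0 ≤ ∑ j, (-L i j) * (y i - y j) ^ 2 :=
    fun i => Finset.sum_nonneg fun j _ => hnn i j
  have h0 : 0 ≤ ∑ i, ∑ j, (-L i j) * (y i - y j) ^ 2 := Finset.sum_nonneg fun i _ => hnn' i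
  rcases h0.lt_or_eq with h | h
  · linarith
  exfalso
  apply hx
  have hz : ∀ i j, (-L i j) * (y i - y j) ^ 2 = 0 := by
    intro i j
    have h1 := (Finset.sum_eq_zero_iff_of_nonneg (fun i _ => hnn' i)).1 h.symm i (Finset.mem_univ _)
    exact (Finset.sum_eq_zero_iff_of_nonneg (fun j _ => hnn i j)).1 h1 j (Finset.mem_univ _)
  have hadj : ∀ i j, G.Adj i j → y i = y j := by
    intro i j hij
    have hl := ((hG i j).1 hij).2
    rcases mul_eq_zero.1 (hz i j) with h1 | h1
    · linarith
    · exact sub_eq_zero.1 (pow_eq_zero_iff (two_ne_zero)|>.1 h1)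
  have hw : ∀ i j, G.Walk i j → y i = y j := by
    intro i j w
    induction w with
    | nil => rfl
    | cons h _ ih => exact (hadj _ _ h).trans ih
  obtain ⟨s, hs⟩ := hne
  ext i
  obtain ⟨w⟩ := hconn.preconnected i.1 s
  rw [hyx i, hw _ _ w, hyS s hs]; rfl
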